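/- arXiv:2008.08761 — 2 statements merged into one kernel-verified Lean document; each statement's English description precedes it below -/
import Mathlib

section
/- The greedy-heuristic algorithm is not truthful. Concretely, let T = {t_1,…,t_5} with appraisements a_1 = 2, a_2 = 3, a_3 = 4, a_4 = 2, a_5 = 5, budget B = 5, and vehicles V = {v_1, v_2, v_3} with T_1 = {t_1,t_3,t_5}, T_2 = {t_1,t_2,t_5}, T_3 = {t_3,t_4,t_5} and true costs c_1 = c_2 = c_3 = 2. If every vehicle bids its true cost, then v_2 is selected as a winner with payment 2 and obtains utility 0; but for any λ ∈ (0,1), if v_2 bids 2 + λ while v_1 and v_3 bid truthfully, then v_2 is still selected as a winner with payment 2 + λ and obtains utility λ > 0. Hence v_2 strictly increases its utility by offering an untruthful bid. -/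
/-- Total appraisement of the tasks covered by the vehicle set `W`:
`A(W) = Σ_{t ∈ ⋃_{i∈W} T_i} a_t`. -/
noncomputable def Aval {V T : Type} [DecidableEq T]
    (a : T → ℝ) (Ts : V → Finset T) (W : Finset V) : ℝ :=
  ∑ t ∈ W.biUnion Ts, a t

/-- Profit-at-bids: `P̄(W) = A(W) − Σ_{i∈W} b_i`. -/
noncomputable def Pbar {V T : Type} [DecidableEq T]
    (a : T → ℝ) (Ts : V → Finset T) (b : V → ℝ) (W : Finset V) : ℝ :=
  Aval a Ts W - ∑ i ∈ W, b i

/-- Marginal coverage value `A(v|W) = A(W ∪ {v}) − A(W)`. -/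
noncomputable def margA {V T : Type} [DecidableEq V] [DecidableEq T]
    (a : T → ℝ) (Ts : V → Finset T) (v : V) (W : Finset V) : ℝ :=
  Aval a Ts (insert v W) - Aval a Ts W

/-- Marginal profit-at-bids `P̄(v|W) = P̄(W ∪ {v}) − P̄(W)`. -/
noncomputable def margP {V T : Type} [DecidableEq V] [DecidableEq T]
    (a : T → ℝ) (Ts : V → Finset T) (b : V → ℝ) (v : V) (W : Finset V) : ℝ :=
  Pbar a Ts b (insert v W) - Pbar a Ts b W

/-- Pick an element of `F` maximizing `f` (with a fixed tie-breaking rule). -/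
noncomputable def pickMax {V : Type} (f : V → ℝ) (F : Finset V) : Option V :=
  if h : F.Nonempty then some (F.exists_max_image f h).choose else none

/-- Fuel-based implementation of the greedy-heuristic algorithm: starting from
`W = ∅`, `s = 0`, let `F = {v ∈ V ∖ W : b_v ≤ B − s}`; while `F ≠ ∅`, select
`v* ∈ F` maximizing `P̄(v|W)/b_v`; if `P̄(v*|W) < 0` stop, otherwise add `v*` to
`W` and `b_{v*}` to `s`. -/
noncomputable def greedyAux {V T : Type} [Fintype V] [DecidableEq V] [DecidableEq T]
    (a : T → ℝ) (Ts : V → Finset T) (b : V → ℝ) (B : ℝ) :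
    ℕ → Finset V → ℝ → Finset V
  | 0, W, _ => W
  | n+1, W, s =>
    match pickMax (fun v => margP a Ts b v W / b v)
        (Finset.univ.filter (fun v => v ∉ W ∧ b v ≤ B - s)) with
    | none => W
    | some v =>
      if margP a Ts b v W < 0 then W
      else greedyAux a Ts b B n (insert v W) (s + b v)

/-- The winner set returned by the greedy-heuristic algorithm
(each winner is paid its bid). -/
noncomputable def greedyHeuristic {V T : Type} [Fintype V] [DecidableEq V] [DecidableEq T]
    (a : T → ℝ) (Ts : V → Finset T) (b : V → ℝ) (B : ℝ) : Finset V :=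
  greedyAux a Ts b B (Fintype.card V) ∅ 0

theorem gh_pick_some {V : Type} (f : V → ℝ) (F : Finset V) (w : V) (hw : w ∈ F) :
    ∃ v, pickMax f F = some v ∧ v ∈ F ∧ ∀ x ∈ F, f x ≤ f v := by
  have h : F.Nonempty := ⟨w, hw⟩
  refine ⟨_, by unfold pickMax; rw [dif_pos h], ?_⟩
  exact (F.exists_max_image f h).choose_spec

theorem gh_mono {V T : Type} [Fintype V] [DecidableEq V] [DecidableEq T]
    (a : T → ℝ) (Ts : V → Finset T) (b : V → ℝ) (B : ℝ) (n : ℕ) :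
    ∀ (W : Finset V) (s : ℝ), W ⊆ greedyAux a Ts b B n W s := by
  induction n with
  | zero => intro W s; simp [greedyAux]
  | succ n ih =>
    intro W s
    rw [greedyAux]
    split
    · exact Finset.Subset.refl _
    · split_ifs
      · exact Finset.Subset.refl _
      · exact (Finset.subset_insert _ _).trans (ih _ _)

theorem gh_step {V T : Type} [Fintype V] [DecidableEq V] [DecidableEq T]
    (a : T → ℝ) (Ts : V → Finset T) (b : V → ℝ) (B : ℝ) (n : ℕ) (W : Finset V) (s : ℝ)
    (w : V) (hw : w ∉ W) (hb : b w ≤ B - s) :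
    ∃ v, v ∉ W ∧ b v ≤ B - s ∧
      (∀ x, x ∉ W → b x ≤ B - s → margP a Ts b x W / b x ≤ margP a Ts b v W / b v) ∧
      (0 ≤ margP a Ts b v W →
        greedyAux a Ts b B (n+1) W s = greedyAux a Ts b B n (insert v W) (s + b v)) := by
  obtain ⟨v, h1, h2, h3⟩ := gh_pick_some (fun v => margP a Ts b v W / b v)
    (Finset.univ.filter (fun v => v ∉ W ∧ b v ≤ B - s)) w (by simp [hw, hb])
  simp only [Finset.mem_filter, Finset.mem_univ, true_and] at h2 h3
  refine ⟨v, h2.1, h2.2, fun x hx hx' => h3 x ⟨hx, hx'⟩, fun h => ?_⟩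
  rw [greedyAux, h1]
  simp [not_lt.mpr h]

theorem gh_wins (l : ℝ) (h0 : 0 ≤ l) (h1 : l < 1) :
    (1 : Fin 3) ∈ greedyHeuristic (![2, 3, 4, 2, 5] : Fin 5 → ℝ)
      (![{0, 2, 4}, {0, 1, 4}, {2, 3, 4}] : Fin 3 → Finset (Fin 5)) ![2, 2 + l, 2] 5 := by
  set a : Fin 5 → ℝ := ![2, 3, 4, 2, 5] with ha
  set Ts : Fin 3 → Finset (Fin 5) := ![{0, 2, 4}, {0, 1, 4}, {2, 3, 4}] with hT
  set b : Fin 3 → ℝ := ![2, 2 + l, 2] with hb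
  have b0 : b 0 = 2 := rfl
  have b1 : b 1 = 2 + l := rfl
  have b2 : b 2 = 2 := rfl
  have u0 : (({0} : Finset (Fin 3)).biUnion Ts) = {0, 2, 4} := by rw [hT]; decide
  have u1 : (({1} : Finset (Fin 3)).biUnion Ts) = {0, 1, 4} := by rw [hT]; decide
  have u2 : (({2} : Finset (Fin 3)).biUnion Ts) = {2, 3, 4} := by rw [hT]; decide
  have u10 : (({1, 0} : Finset (Fin 3)).biUnion Ts) = {0, 1, 2, 4} := by rw [hT]; decide
  have u20 : (({2, 0} : Finset (Fin 3)).biUnion Ts) = {0, 2, 3, 4} := by rw [hT]; decide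
  have u02 : (({0, 2} : Finset (Fin 3)).biUnion Ts) = {0, 2, 3, 4} := by rw [hT]; decide
  have u12 : (({1, 2} : Finset (Fin 3)).biUnion Ts) = {0, 1, 2, 3, 4} := by rw [hT]; decide
  have a0 : a 0 = 2 := rfl
  have a1 : a 1 = 3 := rfl
  have a2 : a 2 = 4 := rfl
  have a3 : a 3 = 2 := rfl
  have a4 : a 4 = 5 := rfl
  clear_value a Ts b
  have A0 : Aval a Ts {0} = 11 := by unfold Aval; rw [u0]; simp [*]; norm_num
  have A1 : Aval a Ts {1} = 10 := by unfold Aval; rw [u1]; simp [*]; norm_num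
  have A2 : Aval a Ts {2} = 11 := by unfold Aval; rw [u2]; simp [*]; norm_num
  have A10 : Aval a Ts {1, 0} = 14 := by unfold Aval; rw [u10]; simp [*]; norm_num
  have A20 : Aval a Ts {2, 0} = 13 := by unfold Aval; rw [u20]; simp [*]; norm_num
  have A02 : Aval a Ts {0, 2} = 13 := by unfold Aval; rw [u02]; simp [*]; norm_num
  have A12 : Aval a Ts {1, 2} = 16 := by unfold Aval; rw [u12]; simp [*]; norm_num
  have Ae : Aval a Ts ∅ = 0 := by simp [Aval]
  have m0 : margP a Ts b 0 ∅ = 9 := by simp [margP, Pbar, A0, Ae, b0]; norm_num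
  have m1 : margP a Ts b 1 ∅ = 8 - l := by simp [margP, Pbar, A1, Ae, b1]; ring
  have m2 : margP a Ts b 2 ∅ = 9 := by simp [margP, Pbar, A2, Ae, b2]; norm_num
  have m10 : margP a Ts b 1 {0} = 1 - l := by simp [margP, Pbar, A10, A0, b1, b0]; ring
  have m20 : margP a Ts b 2 {0} = 0 := by simp [margP, Pbar, A20, A0, b2, b0]; norm_num
  have m02 : margP a Ts b 0 {2} = 0 := by simp [margP, Pbar, A02, A2, b2, b0]; norm_num
  have m12 : margP a Ts b 1 {2} = 3 - l := by simp [margP, Pbar, A12, A2, b1, b2]; ring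
  unfold greedyHeuristic
  rw [Fintype.card_fin]
  obtain ⟨v, -, -, hm, hs⟩ := gh_step a Ts b 5 2 ∅ 0 0 (by simp) (by rw [b0]; norm_num)
  have hm0 := hm 0 (by simp) (by rw [b0]; norm_num)
  match v with
  | 0 =>
    rw [hs (by rw [m0]; norm_num)]
    obtain ⟨w, hw, -, hm', hs'⟩ := gh_step a Ts b 5 1 (insert 0 ∅) (0 + b 0) 1 (by decide)
      (by rw [b0, b1]; linarith)
    have k := hm' 1 (by decide) (by rw [b0, b1]; linarith)
    have p : 0 < (1 - l) / (2 + l) := by apply div_pos <;> linarith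
    match w with
    | 0 => simp at hw
    | 1 =>
      rw [hs' (by simp only [insert_empty_eq]; rw [m10]; linarith)]
      exact gh_mono _ _ _ _ _ _ _ (by simp)
    | 2 =>
      simp only [insert_empty_eq, m10, m20, b1, b2] at k
      linarith
  | 1 =>
    rw [hs (by rw [m1]; linarith)]
    exact gh_mono _ _ _ _ _ _ _ (by simp)
  | 2 =>
    rw [hs (by rw [m2]; norm_num)]
    obtain ⟨w, hw, -, hm', hs'⟩ := gh_step a Ts b 5 1 (insert 2 ∅) (0 + b 2) 1 (by decide)
      (by rw [b2, b1]; linarith)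
    have k := hm' 1 (by decide) (by rw [b2, b1]; linarith)
    have p : 0 < (3 - l) / (2 + l) := by apply div_pos <;> linarith
    match w with
    | 0 =>
      simp only [insert_empty_eq, m12, m02, b1, b0] at k
      linarith
    | 1 =>
      rw [hs' (by simp only [insert_empty_eq]; rw [m12]; linarith)]
      exact gh_mono _ _ _ _ _ _ _ (by simp)
    | 2 => simp at hw

/-- the greedy-heuristic is not truthful.  With tasks
`T = {t₁,…,t₅}`, appraisements `2,3,4,2,5`, budget `B = 5`, vehicles
`V = {v₁,v₂,v₃}` with `T₁ = {t₁,t₃,t₅}`, `T₂ = {t₁,t₂,t₅}`, `T₃ = {t₃,t₄,t₅}`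
and true costs `c₁ = c₂ = c₃ = 2`: bidding truthfully, `v₂` wins with payment
`2` (its bid) and utility `0`; but for any `λ ∈ (0,1)`, bidding `2 + λ` (others
truthful) `v₂` still wins, is paid `2 + λ`, and gets utility `λ > 0` —
strictly more than by bidding truthfully. -/
theorem greedyHeuristic_not_truthful :
    let a : Fin 5 → ℝ := ![2, 3, 4, 2, 5]
    let Ts : Fin 3 → Finset (Fin 5) := ![{0, 2, 4}, {0, 1, 4}, {2, 3, 4}]
    -- utility of v₂ (true cost 2) when the bid profile is `bb`:
    -- it is paid its bid if it wins, so the utility is `bb v₂ − 2` if it wins.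
    let util : (Fin 3 → ℝ) → ℝ := fun bb =>
      if (1 : Fin 3) ∈ greedyHeuristic a Ts bb 5 then bb 1 - 2 else 0
    ((1 : Fin 3) ∈ greedyHeuristic a Ts ![2, 2, 2] 5 ∧ util ![2, 2, 2] = 0) ∧
    ∀ l : ℝ, 0 < l → l < 1 →
      (1 : Fin 3) ∈ greedyHeuristic a Ts ![2, 2 + l, 2] 5 ∧
      util ![2, 2 + l, 2] = l ∧
      util ![2, 2, 2] < util ![2, 2 + l, 2] := by
  intro a Ts util
  have t : (1 : Fin 3) ∈ greedyHeuristic a Ts ![2, 2, 2] 5 := by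
    have := gh_wins 0 le_rfl one_pos
    rwa [add_zero] at this
  have ut : util ![2, 2, 2] = 0 := by
    simp only [util]
    rw [if_pos t]
    simp
  refine ⟨⟨t, ut⟩, fun l h0 h1 => ?_⟩
  have t' := gh_wins l h0.le h1
  have ut' : util ![2, 2 + l, 2] = l := by
    simp only [util]
    rw [if_pos t']
    simp
  exact ⟨t', ut', by rw [ut, ut']; exact h0⟩
end

section
/- (Lemma 2: individual rationality of TBSAP) For every winner v_i in the set X_L output by the TBSAP winner allocation stage, the payment p_i computed by the TBSAP payment stage satisfies p_i ≥ b_i, i.e., no winning vehicle is paid less than its bid. -/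
/-- Unit marginal gain `P̂(v|W) = P̄(v|W)/b_v`. -/
noncomputable def unitGain {V T : Type} [DecidableEq V] [DecidableEq T]
    (a : T → ℝ) (Ts : V → Finset T) (b : V → ℝ) (v : V) (W : Finset V) : ℝ :=
  margP a Ts b v W / b v

/-- Generic fuel-based greedy selection used by both TBSAP stages: from ground set
`G`, with budget `B`, accumulated spending `s` and current selection list `X`
(in selection order), repeatedly select `v* ∈ G ∖ X` maximizing `P̂(v|X)`; stop
if `P̂(v*|X) < 0` or `s + extra v* > B`, otherwise append `v*` to `X` and add
`b_{v*}` to `s`.  The winner allocation stage uses `extra = b`; the payment stage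
for vehicle `i` uses `extra = const (b i)`. -/
noncomputable def tbsapSel {V T : Type} [DecidableEq V] [DecidableEq T]
    (a : T → ℝ) (Ts : V → Finset T) (b : V → ℝ) (B : ℝ) (extra : V → ℝ)
    (G : Finset V) : ℕ → List V → ℝ → List V
  | 0, X, _ => X
  | n+1, X, s =>
    match pickMax (fun v => unitGain a Ts b v X.toFinset) (G \ X.toFinset) with
    | none => X
    | some v =>
      if unitGain a Ts b v X.toFinset < 0 ∨ B < s + extra v then X
      else tbsapSel a Ts b B extra G n (X ++ [v]) (s + b v)

/-- TBSAP winner allocation stage: the output `X_L = [v₁, …, v_L]` in selection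
order; `(tbsapWinners …).take j` (as a finset) is `X_j`. -/
noncomputable def tbsapWinners {V T : Type} [Fintype V] [DecidableEq V] [DecidableEq T]
    (a : T → ℝ) (Ts : V → Finset T) (b : V → ℝ) (B : ℝ) : List V :=
  tbsapSel a Ts b B b Finset.univ (Fintype.card V) [] 0

/-- TBSAP payment-stage greedy over `V₋ᵢ = V ∖ {i}`: produces
`[v_{i_1}, …, v_{i_{L_i}}]`, stopping at the largest `L_i` with
`P̂(v_{i_{L_i}}|Y_{L_i−1}) ≥ 0` and `Σ_{j≤L_i−1} b_{i_j} + b_i ≤ B`. -/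
noncomputable def tbsapPaymentList {V T : Type} [Fintype V] [DecidableEq V] [DecidableEq T]
    (a : T → ℝ) (Ts : V → Finset T) (b : V → ℝ) (B : ℝ) (i : V) : List V :=
  tbsapSel a Ts b B (fun _ => b i) (Finset.univ.erase i) (Fintype.card V) [] 0

/-- The candidate replacement bids `b_{i_j} · A(v_i|Y_{j−1}) / A(v_{i_j}|Y_{j−1})`
for `j = 1, …, L_i` along the payment-stage list. -/
noncomputable def candList {V T : Type} [DecidableEq V] [DecidableEq T]
    (a : T → ℝ) (Ts : V → Finset T) (b : V → ℝ) (i : V) :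
    List V → Finset V → List ℝ
  | [], _ => []
  | v :: rest, Y =>
    (b v * margA a Ts i Y / margA a Ts v Y) :: candList a Ts b i rest (insert v Y)

/-- The TBSAP payment for vehicle `i`:
`p_i = max_{1≤j≤L_i} b_{i_j}·A(v_i|Y_{j−1})/A(v_{i_j}|Y_{j−1})`, additionally
compared with `A(v_i|Y_{L_i})` when `Σ_{j≤L_i} b_{i_j} + b_i ≤ B`.  (All the
compared quantities are nonnegative, so folding `max` from `0` over the
candidate list realizes exactly this maximum.) -/
noncomputable def tbsapPayment {V T : Type} [Fintype V] [DecidableEq V] [DecidableEq T]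
    (a : T → ℝ) (Ts : V → Finset T) (b : V → ℝ) (B : ℝ) (i : V) : ℝ :=
  let Y := tbsapPaymentList a Ts b B i
  let cands := candList a Ts b i Y ∅
  let cands' := if (Y.map b).sum + b i ≤ B then margA a Ts i Y.toFinset :: cands else cands
  cands'.foldr max 0

theorem aux_pick_mem {V : Type} {f : V → ℝ} {F : Finset V} {v : V} (h : pickMax f F = some v) :
    v ∈ F ∧ ∀ w ∈ F, f w ≤ f v := by
  unfold pickMax at h
  split_ifs at h with hF
  have := (F.exists_max_image f hF).choose_spec
  simp only [Option.some.injEq] at h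
  rw [h] at this
  exact this

theorem aux_pick_none {V : Type} {f : V → ℝ} {F : Finset V} (h : pickMax f F = none) :
    F = ∅ := by
  unfold pickMax at h
  split_ifs at h with hF
  simpa using hF

theorem aux_choose_congr {V : Type} {p q : V → Prop} (h : p = q) (hp : ∃ x, p x) (hq : ∃ x, q x) :
    hp.choose = hq.choose := by
  subst h; rfl

theorem aux_pick_erase {V : Type} {f : V → ℝ} {F F' : Finset V} {v i : V}
    (h : pickMax f F = some v) (hF' : ∀ w, w ∈ F' ↔ w ≠ i ∧ w ∈ F) (hi : f i < f v) :
    pickMax f F' = some v := by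
  have hs := aux_pick_mem h
  have hvi : v ≠ i := by rintro rfl; exact lt_irrefl _ hi
  have hne : F'.Nonempty := ⟨v, (hF' v).2 ⟨hvi, hs.1⟩⟩
  have hneF : F.Nonempty := ⟨v, hs.1⟩
  unfold pickMax at h ⊢
  rw [dif_pos hneF] at h
  rw [dif_pos hne, ← h]
  congr 1
  apply aux_choose_congr
  funext x
  apply propext
  constructor
  · rintro ⟨hx, hm⟩
    refine ⟨((hF' x).1 hx).2, fun w hw => ?_⟩
    exact (hs.2 w hw).trans (hm v ((hF' v).2 ⟨hvi, hs.1⟩))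
  · rintro ⟨hx, hm⟩
    refine ⟨(hF' x).2 ⟨?_, hx⟩, fun w hw => hm w ((hF' w).1 hw).2⟩
    rintro rfl
    exact absurd (hm v hs.1) (not_le.2 hi)

section
variable {V T : Type} [DecidableEq V] [DecidableEq T]
    (a : T → ℝ) (Ts : V → Finset T) (b : V → ℝ) (B : ℝ)

theorem aux_sel_prefix (extra : V → ℝ) (G : Finset V) (n : ℕ) : ∀ (X : List V) (s : ℝ),
    ∃ R, tbsapSel a Ts b B extra G n X s = X ++ R := by
  induction n with
  | zero => intro X s; exact ⟨[], by simp [tbsapSel]⟩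
  | succ n ih =>
    intro X s
    unfold tbsapSel
    split
    · exact ⟨[], by simp⟩
    · rename_i v _
      split_ifs
      · exact ⟨[], by simp⟩
      · obtain ⟨R, hR⟩ := ih (X ++ [v]) (s + b v)
        exact ⟨v :: R, by simp [hR]⟩

theorem aux_cand (i v : V) (R : List V) : ∀ (P : List V) (S : Finset V),
    b v * margA a Ts i (S ∪ P.toFinset) / margA a Ts v (S ∪ P.toFinset)
      ∈ candList a Ts b i (P ++ v :: R) S := by
  intro P
  induction P with
  | nil => intro S; simp [candList]
  | cons w P ih =>
    intro S
    have h := ih (insert w S)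
    have e : S ∪ (w :: P).toFinset = insert w S ∪ P.toFinset := by
      ext x; simp
    rw [e]
    simp only [List.cons_append, candList, List.mem_cons]
    exact Or.inr h

theorem aux_le_foldr (l : List ℝ) (x : ℝ) (h : x ∈ l) : x ≤ l.foldr max 0 := by
  induction l with
  | nil => simp at h
  | cons y l ih =>
    simp only [List.foldr_cons]
    rcases List.mem_cons.1 h with rfl | h
    · exact le_max_left _ _
    · exact (ih h).trans (le_max_right _ _)

theorem aux_gain (hb : ∀ i, 0 < b i) (v : V) (W : Finset V) (h : v ∉ W) :
    unitGain a Ts b v W = margA a Ts v W / b v - 1 := by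
  have := (hb v).ne'
  unfold unitGain margP Pbar margA
  rw [Finset.sum_insert h]
  field_simp
  ring

theorem aux_main [Fintype V] (hb : ∀ i, 0 < b i) (i : V) (n : ℕ) :
    ∀ (X : List V) (s : ℝ), s = (X.map b).sum → i ∉ X →
    i ∈ tbsapSel a Ts b B b Finset.univ n X s →
    s + b i ≤ B ∧
    ((∃ P v R, tbsapSel a Ts b B (fun _ => b i) (Finset.univ.erase i) n X s = P ++ v :: R ∧
        b i ≤ b v * margA a Ts i P.toFinset / margA a Ts v P.toFinset) ∨
     (((tbsapSel a Ts b B (fun _ => b i) (Finset.univ.erase i) n X s).map b).sum + b i ≤ B ∧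
      b i ≤ margA a Ts i
        (tbsapSel a Ts b B (fun _ => b i) (Finset.univ.erase i) n X s).toFinset)) := by
  induction n with
  | zero => intro X s _ hi h; exact absurd h hi
  | succ n ih =>
    intro X s hs hi h
    unfold tbsapSel at h
    split at h
    · exact absurd h hi
    rename_i v hv
    split_ifs at h with hc
    · exact absurd h hi
    push Not at hc
    obtain ⟨hg, hB⟩ := hc
    have hm := aux_pick_mem hv
    have hiX : i ∉ X.toFinset := by simpa using hi
    have hle := hm.2 i (by simp [hi])
    -- budget
    have hbud : s + b i ≤ B := by
      by_cases hvi : v = i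
      · rw [← hvi]; exact hB
      · have := (ih (X ++ [v]) (s + b v) (by simp [hs]) (by simp [hi, Ne.symm hvi]) h).1
        have := hb v
        linarith
    refine ⟨hbud, ?_⟩
    rcases hle.lt_or_eq with hlt | heq
    · have hvi : v ≠ i := by rintro rfl; exact lt_irrefl _ hlt
      have hp := aux_pick_erase (F' := Finset.univ.erase i \ X.toFinset) hv (by simp) hlt
      have := (ih (X ++ [v]) (s + b v) (by simp [hs]) (by simp [hi, Ne.symm hvi]) h).2
      have e : tbsapSel a Ts b B (fun _ => b i) (Finset.univ.erase i) (n+1) X s =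
          tbsapSel a Ts b B (fun _ => b i) (Finset.univ.erase i) n (X ++ [v]) (s + b v) := by
        rw [tbsapSel, hp]
        simp only
        rw [if_neg]
        push Not
        exact ⟨hg, hbud⟩
      rw [e]; exact this
    · have hgi : 0 ≤ unitGain a Ts b i X.toFinset := by rw [heq]; exact hg
      have hbi := hb i
      have hgi' := aux_gain a Ts b hb i X.toFinset hiX
      have hAi : b i ≤ margA a Ts i X.toFinset := by
        rw [hgi'] at hgi
        exact (one_le_div hbi).1 (by linarith)
      have hend : (X.map b).sum + b i ≤ B ∧ b i ≤ margA a Ts i X.toFinset := ⟨hs ▸ hbud, hAi⟩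
      cases hw : pickMax (fun v => unitGain a Ts b v X.toFinset)
          (Finset.univ.erase i \ X.toFinset) with
      | none =>
        right
        have e : tbsapSel a Ts b B (fun _ => b i) (Finset.univ.erase i) (n+1) X s = X := by
          rw [tbsapSel, hw]
        rw [e]; exact hend
      | some w =>
        by_cases hwg : unitGain a Ts b w X.toFinset < 0
        · right
          have e : tbsapSel a Ts b B (fun _ => b i) (Finset.univ.erase i) (n+1) X s = X := by
            rw [tbsapSel, hw]
            simp only
            rw [if_pos (Or.inl hwg)]
          rw [e]; exact hend
        · left
          have e : tbsapSel a Ts b B (fun _ => b i) (Finset.univ.erase i) (n+1) X s =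
              tbsapSel a Ts b B (fun _ => b i) (Finset.univ.erase i) n (X ++ [w]) (s + b w) := by
            rw [tbsapSel, hw]
            simp only
            rw [if_neg]
            push Not
            exact ⟨not_lt.1 hwg, hbud⟩
          obtain ⟨R, hR⟩ := aux_sel_prefix a Ts b B (fun _ => b i) (Finset.univ.erase i) n
            (X ++ [w]) (s + b w)
          refine ⟨X, w, R, by rw [e, hR]; simp, ?_⟩
          have hwm := (aux_pick_mem hw).1
          have hwX : w ∉ X.toFinset := (Finset.mem_sdiff.1 hwm).2
          have hle2 := hm.2 w (by simpa using hwX)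
          rw [← heq, hgi', aux_gain a Ts b hb w X.toFinset hwX] at hle2
          rw [aux_gain a Ts b hb w X.toFinset hwX] at hwg
          have hbw := hb w
          have h1 : b w ≤ margA a Ts w X.toFinset := (one_le_div hbw).1 (by linarith)
          have h2 : margA a Ts w X.toFinset / b w ≤ margA a Ts i X.toFinset / b i := by linarith
          rw [div_le_div_iff₀ hbw hbi] at h2
          rw [le_div_iff₀ (by linarith)]
          linarith
end

/-- Lemma 2: individual rationality of TBSAP: every winner `v_i`
in the set `X_L` output by the TBSAP winner allocation stage receives a payment
`p_i ≥ b_i`, i.e. no winning vehicle is paid less than its bid. -/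
theorem tbsap_individually_rational {V T : Type} [Fintype V] [DecidableEq V] [DecidableEq T]
    (a : T → ℝ) (Ts : V → Finset T) (b : V → ℝ) (B : ℝ)
    (ha : ∀ t, 0 < a t) (hb : ∀ i, 0 < b i) (hB : 0 < B) :
    ∀ i ∈ tbsapWinners a Ts b B, b i ≤ tbsapPayment a Ts b B i := by
  intro i hi
  have h := (aux_main a Ts b B hb i (Fintype.card V) [] 0 (by simp) (by simp) hi).2
  unfold tbsapPayment
  simp only
  change (∃ P v R, tbsapPaymentList a Ts b B i = P ++ v :: R ∧ _) ∨
    (((tbsapPaymentList a Ts b B i).map b).sum + b i ≤ B ∧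
      b i ≤ margA a Ts i (tbsapPaymentList a Ts b B i).toFinset) at h
  rcases h with ⟨P, v, R, hY, hle⟩ | ⟨hs, hle⟩
  · have hc := aux_cand a Ts b i v R P ∅
    rw [← hY, Finset.empty_union] at hc
    refine hle.trans (aux_le_foldr _ _ ?_)
    split_ifs
    · exact List.mem_cons_of_mem _ hc
    · exact hc
  · rw [if_pos hs]
    exact hle.trans (aux_le_foldr _ _ List.mem_cons_self)
end
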